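/- Let l : [0,1] → (0,1) be continuous and set r = ∫₀¹ l(y) dy. For each ℓ ≥ 1 let K₀^{(ℓ)}, …, K_{ℓ−1}^{(ℓ)} be independent {0,1}-valued random variables with P(K_j^{(ℓ)} = 1) = l(j/ℓ), and let S^{(ℓ)} = Σ_{j=0}^{ℓ−1} K_j^{(ℓ)}. Let (n_ℓ) be integers with 0 ≤ n_ℓ ≤ ℓ and √ℓ · |n_ℓ/ℓ − r| → 0 as ℓ → ∞. Then liminf_{ℓ→∞} (1/ℓ) [ H(K₀^{(ℓ)}, …, K_{ℓ−1}^{(ℓ)} | S^{(ℓ)} = n_ℓ) − H(K₀^{(ℓ)}, …, K_{ℓ−1}^{(ℓ)}) ] ≥ 0. -/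

import Mathlib

open Filter

/-- The probability that a string of independent `{0,1}`-valued random variables,
where the `i`-th has success probability `p i`, takes the value `x`. -/
noncomputable def bernProb {ℓ : ℕ} (p : Fin ℓ → ℝ) (x : Fin ℓ → Bool) : ℝ :=
  ∏ i, if x i then p i else 1 - p i

/-- The number of ones in the binary string `x`. -/
def onesCount {ℓ : ℕ} (x : Fin ℓ → Bool) : ℕ :=
  (Finset.univ.filter (fun i => x i = true)).card

/-- `P(S = n)` where `S` is the sum of the independent `{0,1}`-valued variables. -/
noncomputable def probSum {ℓ : ℕ} (p : Fin ℓ → ℝ) (n : ℕ) : ℝ :=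
  ∑ x : Fin ℓ → Bool, if onesCount x = n then bernProb p x else 0

/-- Shannon entropy `H(K₀, …, K_{ℓ-1})` of the joint distribution. -/
noncomputable def entJoint {ℓ : ℕ} (p : Fin ℓ → ℝ) : ℝ :=
  -∑ x : Fin ℓ → Bool, bernProb p x * Real.log (bernProb p x)

/-- Shannon entropy `H(K₀, …, K_{ℓ-1} | S = n)` of the conditional distribution
given that the sum of the variables equals `n`. -/
noncomputable def entCond {ℓ : ℕ} (p : Fin ℓ → ℝ) (n : ℕ) : ℝ :=
  -∑ x : Fin ℓ → Bool, if onesCount x = n then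
      (bernProb p x / probSum p n) * Real.log (bernProb p x / probSum p n) else 0

/-- indicator of a one -/
noncomputable def bitVal (b : Bool) : ℝ := if b then 1 else 0

lemma onesCount_cast {ℓ : ℕ} (x : Fin ℓ → Bool) : (onesCount x : ℝ) = ∑ i, bitVal (x i) := by
  unfold onesCount bitVal
  rw [Finset.card_filter]; push_cast; rfl

lemma sum_prod_bool {ℓ : ℕ} (g : Fin ℓ → Bool → ℝ) :
    ∑ x : Fin ℓ → Bool, ∏ i, g i (x i) = ∏ i, (g i true + g i false) := by
  have := Finset.prod_univ_sum (fun _ : Fin ℓ => (Finset.univ : Finset Bool)) g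
  simp only [Fintype.piFinset_univ] at this
  rw [← this]
  simp

lemma bernProb_pos {ℓ : ℕ} (p : Fin ℓ → ℝ) (h0 : ∀ i, 0 < p i) (h1 : ∀ i, p i < 1)
    (x : Fin ℓ → Bool) : 0 < bernProb p x := by
  unfold bernProb
  apply Finset.prod_pos
  intro i _
  have := h0 i
  have := h1 i
  split_ifs <;> linarith

lemma sum_bernProb {ℓ : ℕ} (p : Fin ℓ → ℝ) : ∑ x, bernProb p x = 1 := by
  unfold bernProb
  rw [sum_prod_bool (fun i b => if b then p i else 1 - p i)]
  simp

lemma exp_quad (u : ℝ) (h : |u| ≤ 1) : Real.exp u ≤ 1 + u + u ^ 2 := by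
  have := Real.abs_exp_sub_one_sub_id_le h
  have := (abs_le.1 this).2
  linarith

lemma mgf_one (p u : ℝ) (h0 : 0 < p) (h1 : p < 1) (hu : |u| ≤ 1) :
    p * Real.exp (u * (1 - p)) + (1 - p) * Real.exp (u * (0 - p)) ≤ Real.exp (u ^ 2) := by
  have e1 := exp_quad (u * (1 - p)) (by
    rw [abs_mul, abs_of_pos (by linarith : 0 < 1 - p)]; nlinarith [abs_nonneg u])
  have e2 := exp_quad (u * (0 - p)) (by
    rw [abs_mul, zero_sub, abs_neg, abs_of_pos h0]; nlinarith [abs_nonneg u])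
  have e3 := Real.add_one_le_exp (u ^ 2)
  have e4 := mul_le_mul_of_nonneg_left e1 h0.le
  have e5 := mul_le_mul_of_nonneg_left e2 (by linarith : 0 ≤ 1 - p)
  have e6 : 0 ≤ u ^ 2 := sq_nonneg u
  have e7 : p * (1 - p) ≤ 1 := by nlinarith
  nlinarith [mul_le_mul_of_nonneg_left e7 e6]

lemma mgf_le {ℓ : ℕ} (p u : Fin ℓ → ℝ) (h0 : ∀ i, 0 < p i) (h1 : ∀ i, p i < 1)
    (hu : ∀ i, |u i| ≤ 1) :
    ∑ x, bernProb p x * Real.exp (∑ i, u i * (bitVal (x i) - p i))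
      ≤ Real.exp (∑ i, u i ^ 2) := by
  have : ∀ x : Fin ℓ → Bool, bernProb p x * Real.exp (∑ i, u i * (bitVal (x i) - p i))
      = ∏ i, ((if x i then p i else 1 - p i) * Real.exp (u i * (bitVal (x i) - p i))) := by
    intro x
    rw [Real.exp_sum, bernProb, Finset.prod_mul_distrib]
  simp_rw [this]
  rw [sum_prod_bool (fun i b => (if b then p i else 1 - p i) * Real.exp (u i * (bitVal b - p i))),
    Real.exp_sum]
  apply Finset.prod_le_prod
  · intro i _
    have := h0 i
    have : 0 < 1 - p i := by linarith [h1 i]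
    simp only [if_true, Bool.false_eq_true, if_false]
    positivity
  · intro i _
    simpa [bitVal] using mgf_one (p i) (u i) (h0 i) (h1 i) (hu i)

/-- Donsker-Varadhan type bound. -/
lemma dv {ℓ : ℕ} (p u : Fin ℓ → ℝ) (h0 : ∀ i, 0 < p i) (h1 : ∀ i, p i < 1)
    (hu : ∀ i, |u i| ≤ 1) (A : Finset (Fin ℓ → Bool)) (Z : ℝ) (hZ : Z = ∑ x ∈ A, bernProb p x)
    (hZ0 : 0 < Z) :
    ∑ x ∈ A, bernProb p x / Z * (∑ i, u i * (bitVal (x i) - p i))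
      ≤ ∑ i, u i ^ 2 - Real.log Z := by
  have hw : ∑ x ∈ A, bernProb p x / Z = 1 := by
    rw [← Finset.sum_div, ← hZ, div_self hZ0.ne']
  have J := convexOn_exp.map_sum_le (t := A) (w := fun x => bernProb p x / Z)
    (p := fun x => ∑ i, u i * (bitVal (x i) - p i))
    (fun x _ => div_nonneg (bernProb_pos p h0 h1 x).le hZ0.le) hw (fun x _ => Set.mem_univ _)
  simp only [smul_eq_mul] at J
  have K : ∑ x ∈ A, bernProb p x / Z * Real.exp (∑ i, u i * (bitVal (x i) - p i))
      ≤ Real.exp (∑ i, u i ^ 2) / Z := by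
    rw [le_div_iff₀ hZ0, Finset.sum_mul]
    refine le_trans ?_ (mgf_le p u h0 h1 hu)
    refine le_trans (le_of_eq ?_) (Finset.sum_le_sum_of_subset_of_nonneg (Finset.subset_univ A)
      (fun x _ _ => mul_nonneg (bernProb_pos p h0 h1 x).le (Real.exp_pos _).le))
    apply Finset.sum_congr rfl
    intro x _
    field_simp
  have M := Real.log_le_log (Real.exp_pos _) (J.trans K)
  rw [Real.log_exp, Real.log_div (Real.exp_pos _).ne' hZ0.ne', Real.log_exp] at M
  exact M

lemma log_bernProb {ℓ : ℕ} (p : Fin ℓ → ℝ) (h0 : ∀ i, 0 < p i) (h1 : ∀ i, p i < 1)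
    (x : Fin ℓ → Bool) : Real.log (bernProb p x) =
      ∑ i, (Real.log (p i) - Real.log (1 - p i)) * (bitVal (x i) - p i)
      + ∑ i, (p i * Real.log (p i) + (1 - p i) * Real.log (1 - p i)) := by
  unfold bernProb
  rw [Real.log_prod, ← Finset.sum_add_distrib]
  · apply Finset.sum_congr rfl
    intro i _
    cases x i <;> simp [bitVal] <;> ring
  · intro i _
    have := h0 i
    have := h1 i
    split_ifs <;> linarith

lemma ent_diff {ℓ : ℕ} (p : Fin ℓ → ℝ) (h0 : ∀ i, 0 < p i) (h1 : ∀ i, p i < 1) (n : ℕ)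
    (hZ : 0 < probSum p n) (t Λ : ℝ) (ht : 0 < t) (htΛ : t * Λ ≤ 1)
    (hΛ : ∀ i, |Real.log (p i) - Real.log (1 - p i)| ≤ Λ) :
    (1 + 1 / t) * Real.log (probSum p n) - 2 * t * Λ ^ 2 * ℓ ≤ entCond p n - entJoint p := by
  set lam : Fin ℓ → ℝ := fun i => Real.log (p i) - Real.log (1 - p i) with hlam
  set h : ℝ := ∑ i, (p i * Real.log (p i) + (1 - p i) * Real.log (1 - p i)) with hh
  set L : (Fin ℓ → Bool) → ℝ := fun x => ∑ i, lam i * (bitVal (x i) - p i) with hL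
  set A : Finset (Fin ℓ → Bool) := Finset.univ.filter (fun x => onesCount x = n) with hA
  set Z := probSum p n with hZdef
  have hZA : Z = ∑ x ∈ A, bernProb p x := by
    rw [hZdef, probSum, hA, Finset.sum_filter]
  have hlog : ∀ x, Real.log (bernProb p x) = L x + h := fun x => log_bernProb p h0 h1 x
  have hw : ∑ x ∈ A, bernProb p x / Z = 1 := by
    rw [← Finset.sum_div, ← hZA, div_self hZ.ne']
  have hJ : entJoint p = -(∑ x, bernProb p x * L x) - h := by
    unfold entJoint
    simp_rw [hlog, mul_add, Finset.sum_add_distrib, ← Finset.sum_mul, sum_bernProb]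
    ring
  have hC : entCond p n = -(∑ x ∈ A, bernProb p x / Z * L x) - h + Real.log Z := by
    unfold entCond
    rw [← Finset.sum_filter]
    have : ∀ x ∈ A, bernProb p x / Z * Real.log (bernProb p x / Z)
        = bernProb p x / Z * L x + bernProb p x / Z * (h - Real.log Z) := by
      intro x _
      rw [Real.log_div (bernProb_pos p h0 h1 x).ne' hZ.ne', hlog]
      ring
    rw [Finset.sum_congr rfl this, Finset.sum_add_distrib, ← Finset.sum_mul, hw]
    ring
  have hsq : ∑ i, (t * lam i) ^ 2 ≤ t ^ 2 * Λ ^ 2 * ℓ := by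
    calc ∑ i, (t * lam i) ^ 2 ≤ ∑ _i : Fin ℓ, t ^ 2 * Λ ^ 2 := by
          apply Finset.sum_le_sum
          intro i _
          rw [mul_pow]
          have := sq_le_sq' (abs_le.1 (hΛ i)).1 (abs_le.1 (hΛ i)).2
          exact mul_le_mul_of_nonneg_left this (sq_nonneg t)
      _ = t ^ 2 * Λ ^ 2 * ℓ := by simp; ring
  have hb : ∀ i, |t * lam i| ≤ 1 := fun i => by
    rw [abs_mul, abs_of_pos ht]
    exact (mul_le_mul_of_nonneg_left (hΛ i) ht.le).trans htΛ
  have d1 := dv p (fun i => t * lam i) h0 h1 hb A Z hZA hZ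
  have d2 := dv p (fun i => -(t * lam i)) h0 h1 (fun i => by rw [abs_neg]; exact hb i)
    Finset.univ 1 (sum_bernProb p).symm one_pos
  have e1 : ∑ x ∈ A, bernProb p x / Z * (∑ i, t * lam i * (bitVal (x i) - p i))
      = t * ∑ x ∈ A, bernProb p x / Z * L x := by
    rw [Finset.mul_sum]
    apply Finset.sum_congr rfl
    intro x _
    simp only [hL, mul_assoc]
    rw [← Finset.mul_sum]
    ring
  have e2 : ∑ x, bernProb p x / 1 * (∑ i, -(t * lam i) * (bitVal (x i) - p i))
      = -(t * ∑ x, bernProb p x * L x) := by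
    rw [Finset.mul_sum, ← Finset.sum_neg_distrib]
    apply Finset.sum_congr rfl
    intro x _
    simp only [hL, neg_mul, mul_assoc, Finset.sum_neg_distrib]
    rw [← Finset.mul_sum]
    ring
  rw [e1] at d1
  rw [e2] at d2
  simp only [neg_sq, Real.log_one, sub_zero] at d2
  rw [hJ, hC]
  have f1 : ∑ x ∈ A, bernProb p x / Z * L x ≤ t * Λ ^ 2 * ℓ - 1 / t * Real.log Z := by
    have : t * ∑ x ∈ A, bernProb p x / Z * L x ≤ t * (t * Λ ^ 2 * ℓ - 1 / t * Real.log Z) := by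
      have : t * (t * Λ ^ 2 * ℓ - 1 / t * Real.log Z) = t ^ 2 * Λ ^ 2 * ℓ - Real.log Z := by
        field_simp
      linarith
    exact le_of_mul_le_mul_left this ht
  have f2 : -(∑ x, bernProb p x * L x) ≤ t * Λ ^ 2 * ℓ := by
    have : t * -(∑ x, bernProb p x * L x) ≤ t * (t * Λ ^ 2 * ℓ) := by
      linarith
    exact le_of_mul_le_mul_left this ht
  linarith

lemma probSum_nonneg {ℓ : ℕ} (p : Fin ℓ → ℝ) (h0 : ∀ i, 0 < p i) (h1 : ∀ i, p i < 1) (n : ℕ) :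
    0 ≤ probSum p n := by
  unfold probSum
  apply Finset.sum_nonneg
  intro x _
  have := bernProb_pos p h0 h1 x
  split_ifs <;> linarith

lemma onesCount_cons {ℓ : ℕ} (b : Bool) (x : Fin ℓ → Bool) :
    onesCount (Fin.cons b x : Fin (ℓ + 1) → Bool) = (if b then 1 else 0) + onesCount x := by
  unfold onesCount
  rw [Finset.card_filter, Finset.card_filter, Fin.sum_univ_succ]
  simp

lemma bernProb_cons {ℓ : ℕ} (p : Fin (ℓ + 1) → ℝ) (b : Bool) (x : Fin ℓ → Bool) :
    bernProb p (Fin.cons b x : Fin (ℓ + 1) → Bool) =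
      (if b then p 0 else 1 - p 0) * bernProb (fun i => p i.succ) x := by
  unfold bernProb
  rw [Fin.prod_univ_succ]
  simp

lemma sum_cons {ℓ : ℕ} (f : (Fin (ℓ + 1) → Bool) → ℝ) :
    ∑ x, f x = ∑ x : Fin ℓ → Bool, f (Fin.cons true x) + ∑ x : Fin ℓ → Bool, f (Fin.cons false x) := by
  rw [← (Fin.consEquiv (fun _ => Bool)).sum_comp f, Fintype.sum_prod_type]
  simp [Fin.consEquiv]

lemma probSum_succ_zero {ℓ : ℕ} (p : Fin (ℓ + 1) → ℝ) :
    probSum p 0 = (1 - p 0) * probSum (fun i => p i.succ) 0 := by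
  unfold probSum
  rw [sum_cons, Finset.mul_sum]
  simp [onesCount_cons, bernProb_cons]

lemma probSum_succ_succ {ℓ : ℕ} (p : Fin (ℓ + 1) → ℝ) (m : ℕ) :
    probSum p (m + 1) = p 0 * probSum (fun i => p i.succ) m
      + (1 - p 0) * probSum (fun i => p i.succ) (m + 1) := by
  unfold probSum
  rw [sum_cons, Finset.mul_sum, Finset.mul_sum]
  simp [onesCount_cons, bernProb_cons, add_comm 1]

lemma ratio {a : ℝ} (ha : 0 < a) (ha1 : a < 1) : ∀ (ℓ : ℕ) (p : Fin ℓ → ℝ) (_ : ∀ i, a ≤ p i)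
    (_ : ∀ i, p i ≤ 1 - a) (m : ℕ),
    a * ((ℓ : ℝ) - m) * probSum p m ≤ (m + 1) * probSum p (m + 1) ∧
    a * (m + 1) * probSum p (m + 1) ≤ ((ℓ : ℝ) - m) * probSum p m := by
  intro ℓ
  induction ℓ with
  | zero =>
    intro p _ _ m
    have h1 : probSum p (m + 1) = 0 := by simp [probSum, onesCount]
    rw [h1]
    rcases m with _ | m
    · simp
    · have h2 : probSum p (m + 1) = 0 := by simp [probSum, onesCount]
      rw [h2]; simp
  | succ ℓ ih =>
    intro p hp1 hp2 m
    have IH := ih (fun i => p i.succ) (fun i => hp1 _) (fun i => hp2 _)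
    have nn : ∀ k, 0 ≤ probSum (fun i => p i.succ) k := fun k =>
      probSum_nonneg _ (fun i => ha.trans_le (hp1 _)) (fun i => by linarith [hp2 i.succ]) k
    have q1 := hp1 0
    have q2 := hp2 0
    have hq : a ≤ 1 - p 0 := by linarith
    set P := probSum (fun i => p i.succ) with hP
    have g1 : ∀ k, (1 - p 0) * a * P k ≤ p 0 * P k := fun k =>
      mul_le_mul_of_nonneg_right (by nlinarith) (nn k)
    have g2 : ∀ k, p 0 * a * P k ≤ (1 - p 0) * P k := fun k =>
      mul_le_mul_of_nonneg_right (by nlinarith) (nn k)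
    rcases m with _ | m
    · rw [probSum_succ_succ, probSum_succ_zero]
      obtain ⟨i1, i2⟩ := IH 0
      have j1 := mul_le_mul_of_nonneg_left i1 (ha.le.trans hq)
      have j2 := mul_le_mul_of_nonneg_left i2 (ha.le.trans hq)
      have := g1 0
      have := g2 0
      push_cast at *
      constructor <;> nlinarith
    · rw [probSum_succ_succ, probSum_succ_succ]
      obtain ⟨i1, i2⟩ := IH (m + 1)
      obtain ⟨k1, k2⟩ := IH m
      have j1 := mul_le_mul_of_nonneg_left i1 (ha.le.trans hq)
      have j2 := mul_le_mul_of_nonneg_left i2 (ha.le.trans hq)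
      have j3 := mul_le_mul_of_nonneg_left k1 (ha.le.trans q1)
      have j4 := mul_le_mul_of_nonneg_left k2 (ha.le.trans q1)
      have := g1 (m + 1)
      have := g2 (m + 1)
      push_cast at *
      constructor <;> nlinarith

lemma chain_up (P : ℕ → ℝ) (c : ℝ) (hc : 0 < c) (m j : ℕ)
    (h : ∀ k, m ≤ k → k < m + j → c * P k ≤ P (k + 1)) : c ^ j * P m ≤ P (m + j) := by
  induction j with
  | zero => simp
  | succ j ih =>
    have i1 := ih (fun k h1 h2 => h k h1 (by omega))
    have i2 := h (m + j) (by omega) (by omega)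
    have i3 := mul_le_mul_of_nonneg_left i1 hc.le
    rw [← add_assoc, pow_succ]
    linarith

lemma chain_down (P : ℕ → ℝ) (c : ℝ) (hc : 0 < c) (m j : ℕ)
    (h : ∀ k, m ≤ k → k < m + j → c * P (k + 1) ≤ P k) : c ^ j * P (m + j) ≤ P m := by
  induction j with
  | zero => simp
  | succ j ih =>
    have i1 := ih (fun k h1 h2 => h k h1 (by omega))
    have i2 := h (m + j) (by omega) (by omega)
    have i3 := mul_le_mul_of_nonneg_left i2 (pow_pos hc j).le
    rw [← add_assoc, pow_succ]
    linarith

lemma compare {a : ℝ} (ha : 0 < a) (ha1 : a < 1) {ℓ : ℕ} (hℓ : 0 < ℓ) (p : Fin ℓ → ℝ)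
    (hp1 : ∀ i, a ≤ p i) (hp2 : ∀ i, p i ≤ 1 - a) (m n : ℕ)
    (hm1 : a / 2 * ℓ ≤ m) (hm2 : (m : ℝ) ≤ (1 - a / 2) * ℓ)
    (hn1 : a / 2 * ℓ ≤ n) (hn2 : (n : ℝ) ≤ (1 - a / 2) * ℓ) (D : ℝ)
    (hD : |(m : ℝ) - n| ≤ D) :
    Real.exp (D * Real.log (a ^ 2 / 2)) * probSum p m ≤ probSum p n := by
  have hc : 0 < a ^ 2 / 2 := by positivity
  have hc1 : a ^ 2 / 2 ≤ 1 := by nlinarith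
  have hl : (0 : ℝ) < ℓ := by exact_mod_cast hℓ
  have nn := probSum_nonneg p (fun i => ha.trans_le (hp1 i)) (fun i => by linarith [hp2 i])
  have hlog : Real.log (a ^ 2 / 2) ≤ 0 := Real.log_nonpos hc.le hc1
  have hpow : ∀ j : ℕ, (j : ℝ) ≤ D → Real.exp (D * Real.log (a ^ 2 / 2)) ≤ (a ^ 2 / 2) ^ j := by
    intro j hj
    rw [← Real.exp_log (pow_pos hc j), Real.log_pow]
    apply Real.exp_le_exp.2
    exact mul_le_mul_of_nonpos_right hj hlog
  rcases le_total m n with h | h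
  · obtain ⟨j, rfl⟩ := Nat.exists_eq_add_of_le h
    refine (mul_le_mul_of_nonneg_right (hpow j ?_) (nn m)).trans ?_
    · refine le_trans ?_ hD
      push_cast
      rw [sub_add_cancel_left, abs_neg]
      exact le_abs_self _
    · apply chain_up _ _ hc
      intro k _ hk
      have R := (ratio ha ha1 ℓ p hp1 hp2 k).1
      have hk' : (k : ℝ) + 1 ≤ (m + j : ℕ) := by exact_mod_cast hk
      have e1 : a / 2 * ℓ ≤ (ℓ : ℝ) - k := by linarith
      have e2 : (k : ℝ) + 1 ≤ ℓ := by nlinarith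
      have e3 : a * (a / 2 * ℓ) * probSum p k ≤ ℓ * probSum p (k + 1) := by
        calc _ ≤ a * ((ℓ : ℝ) - k) * probSum p k := by
              gcongr
              exact nn k
          _ ≤ _ := R
          _ ≤ _ := by
              gcongr
              exact nn _
      have : (ℓ : ℝ) * (a ^ 2 / 2 * probSum p k) ≤ ℓ * probSum p (k + 1) := by linarith
      exact le_of_mul_le_mul_left this hl
  · obtain ⟨j, rfl⟩ := Nat.exists_eq_add_of_le h
    refine (mul_le_mul_of_nonneg_right (hpow j ?_) (nn (n + j))).trans ?_
    · refine le_trans ?_ hD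
      push_cast
      rw [add_sub_cancel_left]
      exact le_abs_self _
    · apply chain_down _ _ hc
      intro k hk _
      have R := (ratio ha ha1 ℓ p hp1 hp2 k).2
      have hk' : (n : ℝ) ≤ k := by exact_mod_cast hk
      have e1 : a / 2 * ℓ ≤ (k : ℝ) + 1 := by linarith
      have e2 : (ℓ : ℝ) - k ≤ ℓ := by linarith [(Nat.cast_nonneg k : (0:ℝ) ≤ k)]
      have e3 : a * (a / 2 * ℓ) * probSum p (k + 1) ≤ ℓ * probSum p k := by
        calc _ ≤ a * ((k : ℝ) + 1) * probSum p (k + 1) := by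
              gcongr
              exact nn _
          _ ≤ _ := R
          _ ≤ _ := by
              gcongr
              exact nn _
      have : (ℓ : ℝ) * (a ^ 2 / 2 * probSum p (k + 1)) ≤ ℓ * probSum p k := by linarith
      exact le_of_mul_le_mul_left this hl

lemma onesCount_le {ℓ : ℕ} (x : Fin ℓ → Bool) : onesCount x ≤ ℓ := by
  unfold onesCount
  exact (Finset.card_filter_le _ _).trans (by simp)

lemma tail_bound {ℓ : ℕ} (p : Fin ℓ → ℝ) (h0 : ∀ i, 0 < p i) (h1 : ∀ i, p i < 1)
    (δ : ℝ) (hδ : 0 < δ) (hδ1 : δ ≤ 1) :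
    ∑ x, (if |(onesCount x : ℝ) - ∑ i, p i| ≤ δ * ℓ then 0 else bernProb p x)
      ≤ 2 * Real.exp (-(δ ^ 2 / 4 * ℓ)) := by
  have hb : ∀ i : Fin ℓ, |(fun _ : Fin ℓ => δ / 2) i| ≤ 1 := fun i => by
    simp only
    rw [abs_of_pos (by linarith)]; linarith
  have m1 := mgf_le p (fun _ => δ / 2) h0 h1 hb
  have m2 := mgf_le p (fun _ => -(δ / 2)) h0 h1 (fun i => by rw [abs_neg]; exact hb i)
  have key : ∀ (v : ℝ) (x : Fin ℓ → Bool), ∑ i, v * (bitVal (x i) - p i)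
      = v * ((onesCount x : ℝ) - ∑ i, p i) := by
    intro v x
    rw [← Finset.mul_sum, Finset.sum_sub_distrib, onesCount_cast]
  simp only [key, neg_sq, Finset.sum_const, Finset.card_univ, Fintype.card_fin, nsmul_eq_mul]
    at m1 m2
  calc _ ≤ ∑ x, Real.exp (-(δ / 2 * (δ * ℓ))) *
        (bernProb p x * Real.exp (δ / 2 * ((onesCount x : ℝ) - ∑ i, p i))
        + bernProb p x * Real.exp (-(δ / 2) * ((onesCount x : ℝ) - ∑ i, p i))) := by
        apply Finset.sum_le_sum
        intro x _
        have hP := bernProb_pos p h0 h1 x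
        split_ifs with h
        · positivity
        · push Not at h
          rw [← mul_add, mul_left_comm]
          apply le_mul_of_one_le_right hP.le
          rw [mul_add, ← Real.exp_add, ← Real.exp_add]
          rcases lt_abs.1 h with h | h
          · have : 1 ≤ Real.exp (-(δ / 2 * (δ * ℓ)) + δ / 2 * ((onesCount x : ℝ) - ∑ i, p i)) := by
              apply Real.one_le_exp
              nlinarith
            linarith [Real.exp_pos (-(δ / 2 * (δ * ℓ)) + -(δ / 2) * ((onesCount x : ℝ) - ∑ i, p i))]
          · have : 1 ≤ Real.exp (-(δ / 2 * (δ * ℓ)) + -(δ / 2) * ((onesCount x : ℝ) - ∑ i, p i)) := by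
              apply Real.one_le_exp
              nlinarith
            linarith [Real.exp_pos (-(δ / 2 * (δ * ℓ)) + δ / 2 * ((onesCount x : ℝ) - ∑ i, p i))]
    _ ≤ Real.exp (-(δ / 2 * (δ * ℓ))) *
        (Real.exp (ℓ * (δ / 2) ^ 2) + Real.exp (ℓ * (δ / 2) ^ 2)) := by
        rw [← Finset.mul_sum, Finset.sum_add_distrib]
        gcongr
    _ = 2 * Real.exp (-(δ ^ 2 / 4 * ℓ)) := by
        rw [← two_mul, mul_left_comm, ← Real.exp_add]
        congr 2
        ring

lemma probSum_lower {a : ℝ} (ha : 0 < a) (ha1 : a < 1) {ℓ : ℕ} (hℓ : 0 < ℓ) (p : Fin ℓ → ℝ)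
    (hp1 : ∀ i, a ≤ p i) (hp2 : ∀ i, p i ≤ 1 - a) (n : ℕ) (δ : ℝ) (hδ : 0 < δ) (hδa : δ ≤ a / 2)
    (hn : |(n : ℝ) - ∑ i, p i| ≤ δ * ℓ) (hbig : 2 * Real.exp (-(δ ^ 2 / 4 * ℓ)) ≤ 1 / 2) :
    0 < probSum p n ∧
    2 * δ * ℓ * Real.log (a ^ 2 / 2) - Real.log (2 * (ℓ + 1)) ≤ Real.log (probSum p n) := by
  have h0 : ∀ i, 0 < p i := fun i => ha.trans_le (hp1 i)
  have h1 : ∀ i, p i < 1 := fun i => by linarith [hp2 i]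
  have hl : (0 : ℝ) < ℓ := by exact_mod_cast hℓ
  have hμ1 : a * ℓ ≤ ∑ i, p i := by
    have := Finset.sum_le_sum (s := Finset.univ) (fun i _ => hp1 i)
    simp at this; linarith
  have hμ2 : ∑ i, p i ≤ (1 - a) * ℓ := by
    have := Finset.sum_le_sum (s := Finset.univ) (fun i _ => hp2 i)
    simp at this; linarith
  have hrange : ∀ m : ℕ, |(m : ℝ) - ∑ i, p i| ≤ δ * ℓ →
      a / 2 * ℓ ≤ m ∧ (m : ℝ) ≤ (1 - a / 2) * ℓ := by
    intro m hm
    have := abs_le.1 hm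
    have : δ * ℓ ≤ a / 2 * ℓ := mul_le_mul_of_nonneg_right hδa hl.le
    constructor <;> linarith
  set E := Real.exp (2 * δ * ℓ * Real.log (a ^ 2 / 2)) with hE
  have hE0 : 0 < E := Real.exp_pos _
  have hcmp : ∀ m : ℕ, |(m : ℝ) - ∑ i, p i| ≤ δ * ℓ → E * probSum p m ≤ probSum p n := by
    intro m hm
    refine compare ha ha1 hℓ p hp1 hp2 m n (hrange m hm).1 (hrange m hm).2 (hrange n hn).1
      (hrange n hn).2 _ ?_
    have A := abs_le.1 hm
    have B := abs_le.1 hn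
    rw [abs_le]
    constructor <;> linarith
  have nn := probSum_nonneg p h0 h1
  have tb := tail_bound p h0 h1 δ hδ (by linarith)
  have split : (1 : ℝ) = ∑ x, (if |(onesCount x : ℝ) - ∑ i, p i| ≤ δ * ℓ then bernProb p x else 0)
      + ∑ x, (if |(onesCount x : ℝ) - ∑ i, p i| ≤ δ * ℓ then 0 else bernProb p x) := by
    rw [← Finset.sum_add_distrib, ← sum_bernProb p]
    apply Finset.sum_congr rfl
    intro x _
    split_ifs <;> simp
  have good : E * ∑ x, (if |(onesCount x : ℝ) - ∑ i, p i| ≤ δ * ℓ then bernProb p x else 0)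
      ≤ (ℓ + 1) * probSum p n := by
    have : ∑ x, (if |(onesCount x : ℝ) - ∑ i, p i| ≤ δ * ℓ then bernProb p x else 0)
        = ∑ m ∈ Finset.range (ℓ + 1), if |(m : ℝ) - ∑ i, p i| ≤ δ * ℓ then probSum p m else 0 := by
      have e : ∀ m : ℕ, (if |(m : ℝ) - ∑ i, p i| ≤ δ * ℓ then probSum p m else 0)
          = ∑ x, if onesCount x = m then
            (if |(onesCount x : ℝ) - ∑ i, p i| ≤ δ * ℓ then bernProb p x else 0) else 0 := by
        intro m
        split_ifs with h
        · unfold probSum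
          apply Finset.sum_congr rfl
          intro x _
          by_cases hx : onesCount x = m
          · simp only [hx, if_true, h]
          · simp only [hx, if_false]
        · symm
          apply Finset.sum_eq_zero
          intro x _
          by_cases hx : onesCount x = m
          · simp only [hx, if_true, h, if_false]
          · simp only [hx, if_false]
      simp_rw [e]
      rw [Finset.sum_comm]
      apply Finset.sum_congr rfl
      intro x _
      rw [Finset.sum_ite_eq, if_pos (Finset.mem_range.2 (Nat.lt_succ_of_le (onesCount_le x)))]
    rw [this, Finset.mul_sum]
    calc _ ≤ ∑ _m ∈ Finset.range (ℓ + 1), probSum p n := by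
          apply Finset.sum_le_sum
          intro m _
          split_ifs with h
          · exact hcmp m h
          · simpa using nn n
      _ = _ := by simp
  have fin : E ≤ 2 * (ℓ + 1) * probSum p n := by nlinarith
  have hpos : 0 < probSum p n := by
    by_contra hneg
    push Not at hneg
    have : 2 * ((ℓ : ℝ) + 1) * probSum p n ≤ 0 := mul_nonpos_of_nonneg_of_nonpos (by positivity) hneg
    linarith
  refine ⟨hpos, ?_⟩
  have := Real.log_le_log hE0 fin
  rw [hE, Real.log_exp, Real.log_mul (by positivity) hpos.ne'] at this
  linarith

lemma riemann (l : ℝ → ℝ) (hl : ContinuousOn l (Set.Icc 0 1)) (ε : ℝ) (hε : 0 < ε) :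
    ∀ᶠ ℓ : ℕ in atTop, |∑ i : Fin ℓ, l ((i : ℝ) / (ℓ : ℝ)) - ℓ * ∫ y in (0:ℝ)..1, l y| ≤ ε * ℓ := by
  have uc := isCompact_Icc.uniformContinuousOn_of_continuous hl
  rw [Metric.uniformContinuousOn_iff] at uc
  obtain ⟨δ, hδ, H⟩ := uc ε hε
  obtain ⟨N, hN⟩ := exists_nat_gt (1 / δ)
  filter_upwards [eventually_ge_atTop (max N 1)] with ℓ hℓ
  have hℓ1 : 1 ≤ ℓ := (le_max_right _ _).trans hℓ
  have hℓN : N ≤ ℓ := (le_max_left _ _).trans hℓ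
  have hp : (0 : ℝ) < ℓ := by exact_mod_cast hℓ1
  have hlt : 1 / (ℓ : ℝ) < δ := by
    rw [div_lt_comm₀ hp hδ]
    exact hN.trans_le (by exact_mod_cast hℓN)
  have hsub : ∀ k < ℓ, Set.Icc ((k : ℝ) / ℓ) (((k + 1 : ℕ) : ℝ) / ℓ) ⊆ Set.Icc 0 1 := by
    intro k hk
    apply Set.Icc_subset_Icc
    · positivity
    · rw [div_le_one hp]; exact_mod_cast hk
  have hle : ∀ k : ℕ, (k : ℝ) / ℓ ≤ ((k + 1 : ℕ) : ℝ) / ℓ := by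
    intro k
    gcongr
    omega
  have hint : ∀ k < ℓ, IntervalIntegrable l MeasureTheory.volume ((k : ℝ) / ℓ)
      (((k + 1 : ℕ) : ℝ) / ℓ) := by
    intro k hk
    apply ContinuousOn.intervalIntegrable
    rw [Set.uIcc_of_le (hle k)]
    exact hl.mono (hsub k hk)
  have S := intervalIntegral.sum_integral_adjacent_intervals (a := fun k : ℕ => (k : ℝ) / ℓ) hint
  simp only [Nat.cast_zero, zero_div, div_self hp.ne'] at S
  rw [← S, Fin.sum_univ_eq_sum_range (fun k => l ((k : ℝ) / ℓ)), Finset.mul_sum,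
    ← Finset.sum_sub_distrib]
  refine (Finset.abs_sum_le_sum_abs _ _).trans ?_
  have : ∀ k ∈ Finset.range ℓ, |l ((k : ℝ) / ℓ) -
      ℓ * ∫ y in ((k : ℝ) / ℓ)..(((k + 1 : ℕ) : ℝ) / ℓ), l y| ≤ ε := by
    intro k hk
    have hk := Finset.mem_range.1 hk
    have hw : ((k + 1 : ℕ) : ℝ) / ℓ - (k : ℝ) / ℓ = 1 / ℓ := by push_cast; ring
    have e : l ((k : ℝ) / ℓ) - ℓ * ∫ y in ((k : ℝ) / ℓ)..(((k + 1 : ℕ) : ℝ) / ℓ), l y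
        = ℓ * ∫ y in ((k : ℝ) / ℓ)..(((k + 1 : ℕ) : ℝ) / ℓ), (l ((k : ℝ) / ℓ) - l y) := by
      rw [intervalIntegral.integral_sub (by simp) (hint k hk), intervalIntegral.integral_const, hw,
        smul_eq_mul, mul_sub]
      field_simp
    have b := intervalIntegral.norm_integral_le_of_norm_le_const (a := (k : ℝ) / ℓ)
      (b := ((k + 1 : ℕ) : ℝ) / ℓ) (C := ε) (f := fun y => l ((k : ℝ) / ℓ) - l y) (by
        intro y hy
        rw [Set.uIoc_of_le (hle k)] at hy
        have hy' := Set.Ioc_subset_Icc_self hy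
        have hy0 : (k : ℝ) / ℓ ∈ Set.Icc ((k : ℝ) / ℓ) (((k + 1 : ℕ) : ℝ) / ℓ) :=
          ⟨le_refl _, hle k⟩
        have := H _ (hsub k hk hy0) _ (hsub k hk hy') (by
          rw [Real.dist_eq, abs_sub_comm, abs_of_nonneg (by linarith [hy'.1])]
          linarith [hy'.2])
        rw [Real.dist_eq] at this
        exact this.le)
    rw [e, abs_mul, abs_of_pos hp]
    rw [hw, Real.norm_eq_abs, abs_of_pos (by positivity : 0 < 1 / (ℓ : ℝ))] at b
    calc _ ≤ (ℓ : ℝ) * (ε * (1 / ℓ)) := mul_le_mul_of_nonneg_left b hp.le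
      _ = ε := by field_simp
  refine (Finset.sum_le_sum this).trans ?_
  simp [mul_comm]

lemma bounds (l : ℝ → ℝ) (hl : ContinuousOn l (Set.Icc 0 1))
    (hl01 : ∀ y ∈ Set.Icc (0:ℝ) 1, l y ∈ Set.Ioo (0:ℝ) 1) :
    ∃ a : ℝ, 0 < a ∧ a < 1 ∧ ∀ y ∈ Set.Icc (0:ℝ) 1, a ≤ l y ∧ l y ≤ 1 - a := by
  have hne : (Set.Icc (0:ℝ) 1).Nonempty := ⟨0, by simp⟩
  obtain ⟨y1, hy1, h1⟩ := isCompact_Icc.exists_isMinOn hne hl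
  obtain ⟨y2, hy2, h2⟩ := isCompact_Icc.exists_isMaxOn hne hl
  have := hl01 y1 hy1
  have := hl01 y2 hy2
  refine ⟨min (l y1) (1 - l y2), ?_, ?_, ?_⟩
  · apply lt_min <;> simp_all
  · apply min_lt_of_left_lt; simp_all
  · intro y hy
    have a1 : l y1 ≤ l y := h1 hy
    have a2 : l y ≤ l y2 := h2 hy
    constructor
    · exact (min_le_left _ _).trans a1
    · linarith [min_le_right (l y1) (1 - l y2)]

lemma log_small (η : ℝ) (hη : 0 < η) :
    ∀ᶠ ℓ : ℕ in atTop, Real.log (2 * ((ℓ : ℝ) + 1)) ≤ η * ℓ := by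
  have T : Tendsto (fun ℓ : ℕ => 2 * ((ℓ : ℝ) + 1)) atTop atTop :=
    (tendsto_atTop_add_const_right _ 1 tendsto_natCast_atTop_atTop).const_mul_atTop two_pos
  have := T.eventually (Real.isLittleO_log_id_atTop.bound (by positivity : 0 < η / 4))
  filter_upwards [this, eventually_ge_atTop 1] with ℓ h h1
  have h1' : (1 : ℝ) ≤ ℓ := by exact_mod_cast h1
  have h2 := (le_abs_self _).trans h
  simp only [id, Real.norm_eq_abs] at h2
  rw [abs_of_pos (by positivity)] at h2
  nlinarith

lemma exp_small (η : ℝ) (hη : 0 < η) :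
    ∀ᶠ ℓ : ℕ in atTop, 2 * Real.exp (-(η * ℓ)) ≤ 1 / 2 := by
  have T : Tendsto (fun ℓ : ℕ => Real.exp (-(η * ℓ))) atTop (nhds 0) :=
    Real.tendsto_exp_neg_atTop_nhds_zero.comp
      (tendsto_natCast_atTop_atTop.const_mul_atTop hη)
  filter_upwards [T.eventually (eventually_le_nhds (by norm_num : (0:ℝ) < 1 / 4))] with ℓ h
  linarith

/-- for independent `{0,1}`-valued variables `K_j^{(ℓ)}` with means `l(j/ℓ)`,
if `√ℓ · |n_ℓ/ℓ − r| → 0` where `r = ∫₀¹ l`, then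
`liminf (1/ℓ)[H(K | S = n_ℓ) − H(K)] ≥ 0`, stated in the equivalent
`∀ ε > 0, eventually ≥ -ε` form. -/
theorem stmt0 (l : ℝ → ℝ) (hl : ContinuousOn l (Set.Icc 0 1))
    (hl01 : ∀ y ∈ Set.Icc (0:ℝ) 1, l y ∈ Set.Ioo (0:ℝ) 1)
    (n : ℕ → ℕ) (hn : ∀ ℓ, n ℓ ≤ ℓ)
    (hconv : Tendsto (fun ℓ : ℕ =>
        Real.sqrt ℓ * |(n ℓ : ℝ) / (ℓ : ℝ) - ∫ y in (0:ℝ)..1, l y|) atTop (nhds 0)) :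
    ∀ ε > 0, ∀ᶠ ℓ : ℕ in atTop,
      (1 / (ℓ : ℝ)) * (entCond (fun i : Fin ℓ => l ((i : ℝ) / (ℓ : ℝ))) (n ℓ)
        - entJoint (fun i : Fin ℓ => l ((i : ℝ) / (ℓ : ℝ)))) ≥ -ε := by
  intro ε hε
  obtain ⟨a, ha, ha1, hab⟩ := bounds l hl hl01
  set Λ : ℝ := 1 - Real.log a with hΛ
  have hloga : Real.log a < 0 := Real.log_neg ha ha1
  have hΛ0 : 0 < Λ := by linarith
  set t : ℝ := min (1 / Λ) (ε / (4 * Λ ^ 2)) with ht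
  have ht0 : 0 < t := lt_min (by positivity) (by positivity)
  have htΛ : t * Λ ≤ 1 := by
    have := min_le_left (1 / Λ) (ε / (4 * Λ ^ 2))
    rw [← ht, le_div_iff₀ hΛ0] at this
    exact this
  have htε : 2 * t * Λ ^ 2 ≤ ε / 2 := by
    have := min_le_right (1 / Λ) (ε / (4 * Λ ^ 2))
    rw [← ht, le_div_iff₀ (by positivity)] at this
    linarith
  set q : ℝ := 1 + 1 / t with hq
  have hq0 : 0 < q := by positivity
  set M : ℝ := -Real.log (a ^ 2 / 2) with hM
  have hM0 : 0 < M := by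
    have := Real.log_neg (by positivity : 0 < a ^ 2 / 2) (by nlinarith)
    linarith
  set δ : ℝ := min (a / 2) (ε / (8 * q * M)) with hδ
  have hδ0 : 0 < δ := lt_min (by positivity) (by positivity)
  have hδa : δ ≤ a / 2 := min_le_left _ _
  have hδM : q * (2 * δ * M) ≤ ε / 4 := by
    have := min_le_right (a / 2) (ε / (8 * q * M))
    rw [← hδ, le_div_iff₀ (by positivity)] at this
    linarith
  filter_upwards [log_small (ε / (4 * q)) (by positivity), exp_small (δ ^ 2 / 4) (by positivity),
    riemann l hl (δ / 2) (by positivity), eventually_ge_atTop 1,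
    hconv.eventually (eventually_le_nhds (by positivity : 0 < δ / 2))] with ℓ e1 e2 e3 e4 e5
  have hp : (1 : ℝ) ≤ ℓ := by exact_mod_cast e4
  have hp0 : (0 : ℝ) < ℓ := by linarith
  have hmem : ∀ i : Fin ℓ, (i : ℝ) / (ℓ : ℝ) ∈ Set.Icc (0:ℝ) 1 := by
    intro i
    refine ⟨by positivity, ?_⟩
    rw [div_le_one hp0]
    exact_mod_cast i.2.le
  set p : Fin ℓ → ℝ := fun i => l ((i : ℝ) / (ℓ : ℝ)) with hpdef
  have hp1 : ∀ i, a ≤ p i := fun i => (hab _ (hmem i)).1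
  have hp2 : ∀ i, p i ≤ 1 - a := fun i => (hab _ (hmem i)).2
  have hnμ : |(n ℓ : ℝ) - ∑ i, p i| ≤ δ * ℓ := by
    have s1 : 1 ≤ Real.sqrt ℓ := Real.one_le_sqrt.2 hp
    have s2 : |(n ℓ : ℝ) / (ℓ : ℝ) - ∫ y in (0:ℝ)..1, l y| ≤ δ / 2 :=
      (le_mul_of_one_le_left (abs_nonneg _) s1).trans e5
    have s3 : |(n ℓ : ℝ) - ℓ * ∫ y in (0:ℝ)..1, l y| ≤ δ / 2 * ℓ := by
      have : (n ℓ : ℝ) - ℓ * ∫ y in (0:ℝ)..1, l y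
          = ((n ℓ : ℝ) / (ℓ : ℝ) - ∫ y in (0:ℝ)..1, l y) * ℓ := by field_simp
      rw [this, abs_mul, abs_of_pos hp0]
      exact mul_le_mul_of_nonneg_right s2 hp0.le
    have A := abs_le.1 s3
    have B := abs_le.1 e3
    rw [abs_le]
    constructor <;> linarith
  obtain ⟨hZ, hlogZ⟩ := probSum_lower ha ha1 e4 p hp1 hp2 (n ℓ) δ hδ0 hδa hnμ e2
  have hD := ent_diff p (fun i => ha.trans_le (hp1 i)) (fun i => by linarith [hp2 i]) (n ℓ) hZ
    t Λ ht0 htΛ (fun i => by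
      have c1 := Real.log_le_log ha (hp1 i)
      have c2 := Real.log_le_log ha (by linarith [hp2 i] : a ≤ 1 - p i)
      have c3 := Real.log_nonpos (ha.le.trans (hp1 i)) (by linarith [hp2 i])
      have c4 := Real.log_nonpos (by linarith [hp2 i] : 0 ≤ 1 - p i) (by linarith [hp1 i])
      rw [abs_le]
      constructor <;> linarith)
  have f1 : q * (-(2 * δ * M * ℓ) - ε / (4 * q) * ℓ) ≤ q * Real.log (probSum p (n ℓ)) := by
    apply mul_le_mul_of_nonneg_left _ hq0.le
    have : 2 * δ * ℓ * Real.log (a ^ 2 / 2) = -(2 * δ * M * ℓ) := by rw [hM]; ring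
    linarith
  have f2 : q * (ε / (4 * q) * ℓ) = ε / 4 * ℓ := by field_simp
  have f3 := mul_le_mul_of_nonneg_right hδM hp0.le
  have f4 := mul_le_mul_of_nonneg_right htε hp0.le
  have f5 : -ε * ℓ ≤ entCond p (n ℓ) - entJoint p := by linarith
  rw [ge_iff_le, one_div, ← div_eq_inv_mul, le_div_iff₀ hp0]
  exact f5
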